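/- Let 𝚫 ∈ Ã be a gentle quiver without branch arrows and without branch triangles. Then for each triangle 𝒪 in 𝚫 there exists a unique arrow γ_𝒪 ∈ 𝒪 such that the quiver Δ ∖ {γ_𝒪} (same vertices, arrows Δ₁ ∖ {γ_𝒪}) has no branch arrows. -/

import Mathlib

/-! Common formalization infrastructure for gentle quivers (Bobinski–Buan,
    "Derived equivalence classification of gentle cluster tilted algebras"). -/

/-- A (finite) quiver with (length-two, monomial) relations.  Vertices and
arrows are natural numbers; `V` and `A` are the finite sets of vertices and
arrows, `src`/`tgt` give the start and terminus of each arrow, and `rel` is the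
set of relations, a relation `(a, b)` standing for the length-two path
`a·b` (so `src a = tgt b`). -/
structure QuivRel where
  V : Finset ℕ
  A : Finset ℕ
  src : ℕ → ℕ
  tgt : ℕ → ℕ
  rel : Finset (ℕ × ℕ)

namespace GentleQuiv

/-- Two vertices are adjacent if some arrow joins them (in either direction). -/
def Adj (Q : QuivRel) (x y : ℕ) : Prop :=
  ∃ a ∈ Q.A, (Q.src a = x ∧ Q.tgt a = y) ∨ (Q.src a = y ∧ Q.tgt a = x)

/-- A quiver is connected if any two of its vertices are joined by a walk. -/
def Connected (Q : QuivRel) : Prop :=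
  ∀ x ∈ Q.V, ∀ y ∈ Q.V, Relation.ReflTransGen (Adj Q) x y

/-- `l = [α₁, …, αₙ]` is a (nonempty) path in the quiver: consecutive arrows
compose, i.e. `s αᵢ = t αᵢ₊₁`. -/
def IsPathList (Q : QuivRel) (l : List ℕ) : Prop :=
  l ≠ [] ∧ (∀ a ∈ l, a ∈ Q.A) ∧ l.Chain' (fun a b => Q.src a = Q.tgt b)

/-- The path `l` contains a subpath (two consecutive arrows) lying in `R`. -/
def HasRelSubpath (Q : QuivRel) (l : List ℕ) : Prop :=
  ∃ a b, (a, b) ∈ Q.rel ∧ [a, b] <:+: l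

/-- Gentle quiver: connected, relations are composable pairs of arrows, at most
two arrows in/out of every vertex, the usual gentleness conditions on
relations, and a global bound forcing finite dimensionality. -/
def IsGentle (Q : QuivRel) : Prop :=
  Q.V.Nonempty ∧
  (∀ a ∈ Q.A, Q.src a ∈ Q.V ∧ Q.tgt a ∈ Q.V) ∧
  Connected Q ∧
  (∀ ρ ∈ Q.rel, ρ.1 ∈ Q.A ∧ ρ.2 ∈ Q.A ∧ Q.src ρ.1 = Q.tgt ρ.2) ∧
  (∀ x, (Q.A.filter fun a => Q.src a = x).card ≤ 2) ∧
  (∀ x, (Q.A.filter fun a => Q.tgt a = x).card ≤ 2) ∧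
  (∀ a ∈ Q.A, (Q.A.filter fun b => Q.src b = Q.tgt a ∧ (b, a) ∉ Q.rel).card ≤ 1) ∧
  (∀ a ∈ Q.A, (Q.A.filter fun c => Q.tgt c = Q.src a ∧ (a, c) ∉ Q.rel).card ≤ 1) ∧
  (∀ a ∈ Q.A, (Q.A.filter fun b => (b, a) ∈ Q.rel).card ≤ 1) ∧
  (∀ a ∈ Q.A, (Q.A.filter fun c => (a, c) ∈ Q.rel).card ≤ 1) ∧
  (∃ n : ℕ, ∀ l : List ℕ, IsPathList Q l → l.length = n → HasRelSubpath Q l)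

/-- A choice of functions `σ, τ : Δ₁ → {±1}` as in Avella-Alaminos–Geiss. -/
structure SigmaTau (Q : QuivRel) where
  σ : ℕ → ℤ
  τ : ℕ → ℤ
  σ_pm : ∀ a ∈ Q.A, σ a = 1 ∨ σ a = -1
  τ_pm : ∀ a ∈ Q.A, τ a = 1 ∨ τ a = -1
  σ_src : ∀ a ∈ Q.A, ∀ b ∈ Q.A, a ≠ b → Q.src a = Q.src b → σ a = -σ b
  τ_tgt : ∀ a ∈ Q.A, ∀ b ∈ Q.A, a ≠ b → Q.tgt a = Q.tgt b → τ a = -τ b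
  rel_iff : ∀ a ∈ Q.A, ∀ b ∈ Q.A, Q.src a = Q.tgt b → ((a, b) ∈ Q.rel ↔ σ a = τ b)

/-- A thread: either a trivial path/antipath `1_{x,ε}` at a vertex `x` with a
sign `ε`, or a sequence of arrows of positive length. -/
inductive Thread where
  | triv (x : ℕ) (ε : ℤ) : Thread
  | arrows (l : List ℕ) : Thread
deriving DecidableEq

/-- Source of a thread. -/
def Thread.source (Q : QuivRel) : Thread → ℕ
  | .triv x _ => x
  | .arrows l => Q.src l.getLast!

/-- Target of a thread. -/
def Thread.target (Q : QuivRel) : Thread → ℕ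
  | .triv x _ => x
  | .arrows l => Q.tgt l.head!

/-- `σω` (for paths and antipaths alike; `σ 1_{x,ε} = ε = σ 1'_{x,ε}`). -/
def Thread.sigma {Q : QuivRel} (st : SigmaTau Q) : Thread → ℤ
  | .triv _ ε => ε
  | .arrows l => st.σ l.getLast!

/-- `τω` when `ω` is regarded as a path (`τ 1_{x,ε} = -ε`). -/
def Thread.tauPath {Q : QuivRel} (st : SigmaTau Q) : Thread → ℤ
  | .triv _ ε => -ε
  | .arrows l => st.τ l.head!

/-- `τω` when `ω` is regarded as an antipath (`τ 1'_{x,ε} = ε`). -/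
def Thread.tauAnti {Q : QuivRel} (st : SigmaTau Q) : Thread → ℤ
  | .triv _ ε => ε
  | .arrows l => st.τ l.head!

/-- Length of a thread. -/
def Thread.len : Thread → ℕ
  | .triv _ _ => 0
  | .arrows l => l.length

/-- A path in `𝚫` of positive length (no two consecutive arrows in `R`). -/
def IsPermList (Q : QuivRel) (l : List ℕ) : Prop :=
  IsPathList Q l ∧ l.Chain' (fun a b => (a, b) ∉ Q.rel)

/-- An antipath in `𝚫` of positive length (all consecutive pairs in `R`). -/
def IsAntiList (Q : QuivRel) (l : List ℕ) : Prop :=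
  l ≠ [] ∧ (∀ a ∈ l, a ∈ Q.A) ∧ l.Chain' (fun a b => (a, b) ∈ Q.rel)

/-- A thread is a path in `𝚫` (including trivial ones). -/
def IsPathThread (Q : QuivRel) : Thread → Prop
  | .triv x ε => x ∈ Q.V ∧ (ε = 1 ∨ ε = -1)
  | .arrows l => IsPermList Q l

/-- A thread is an antipath in `𝚫` (including trivial ones). -/
def IsAntiThread (Q : QuivRel) : Thread → Prop
  | .triv x ε => x ∈ Q.V ∧ (ε = 1 ∨ ε = -1)
  | .arrows l => IsAntiList Q l

/-- `w ∈ ℳ`: `w` is a maximal path of `𝚫`. -/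
def InM (Q : QuivRel) (st : SigmaTau Q) (w : Thread) : Prop :=
  IsPathThread Q w ∧
  (¬ ∃ a ∈ Q.A, Q.src a = w.target Q ∧ st.σ a = -(w.tauPath st)) ∧
  (¬ ∃ b ∈ Q.A, Q.tgt b = w.source Q ∧ st.τ b = -(w.sigma st))

/-- `w ∈ 𝒩`: `w` is a maximal antipath of `𝚫`. -/
def InN (Q : QuivRel) (st : SigmaTau Q) (w : Thread) : Prop :=
  IsAntiThread Q w ∧
  (¬ ∃ a ∈ Q.A, Q.src a = w.target Q ∧ st.σ a = w.tauAnti st) ∧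
  (¬ ∃ b ∈ Q.A, Q.tgt b = w.source Q ∧ st.τ b = w.sigma st)

/-- The graph of the bijection `Φ = φ ∘ ψ : 𝒩 → 𝒩`:  `PhiRel Q st w w'` holds
iff `w, w' ∈ 𝒩` and the maximal path `ψ w` (with `s(ψw) = sw`, `σ(ψw) = -σw`)
satisfies `t w' = t (ψ w)` and `τ w' = -τ(ψ w)`, i.e. `w' = φ (ψ w) = Φ w`. -/
def PhiRel (Q : QuivRel) (st : SigmaTau Q) (w w' : Thread) : Prop :=
  InN Q st w ∧ InN Q st w' ∧
  ∃ m : Thread, InM Q st m ∧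
    m.source Q = w.source Q ∧ m.sigma st = -(w.sigma st) ∧
    w'.target Q = m.target Q ∧ w'.tauAnti st = -(m.tauPath st)

/-- `O` is an orbit of the `ℤ`-action on `𝒩` induced by `Φ`. -/
def NOrbit (Q : QuivRel) (st : SigmaTau Q) (O : Set Thread) : Prop :=
  ∃ w, InN Q st w ∧ O = {w' | Relation.EqvGen (PhiRel Q st) w w'}

/-- `p(𝒪) = |𝒪|` for an orbit `𝒪 ∈ 𝒩/ℤ`. -/
noncomputable def pN (O : Set Thread) : ℕ := O.ncard

/-- `q(𝒪) = Σ_{ω ∈ 𝒪} ℓ(ω)` for an orbit `𝒪 ∈ 𝒩/ℤ`. -/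
noncomputable def qN (O : Set Thread) : ℕ := ∑ᶠ w ∈ O, Thread.len w

/-- `a ∈ 𝒞`: the arrow `a` occurs in no maximal antipath. -/
def InC (Q : QuivRel) (st : SigmaTau Q) (a : ℕ) : Prop :=
  a ∈ Q.A ∧ ¬ ∃ l : List ℕ, InN Q st (.arrows l) ∧ a ∈ l

/-- The graph of the bijection `Ψ : 𝒞 → 𝒞`. -/
def PsiRel (Q : QuivRel) (st : SigmaTau Q) (a b : ℕ) : Prop :=
  InC Q st a ∧ InC Q st b ∧ Q.tgt b = Q.src a ∧ st.τ b = st.σ a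

/-- `O` is an orbit of the `ℤ`-action on `𝒞` induced by `Ψ`. -/
def COrbit (Q : QuivRel) (st : SigmaTau Q) (O : Set ℕ) : Prop :=
  ∃ a, InC Q st a ∧ O = {b | Relation.EqvGen (PsiRel Q st) a b}

/-- The Avella-Alaminos–Geiss invariant `f_𝚫 : ℕ² → ℕ`:  `f_𝚫 (p,q)` counts the
orbits `𝒪 ∈ 𝒩/ℤ ⊔ 𝒞/ℤ` with `p(𝒪) = p` and `q(𝒪) = q`. -/
noncomputable def fInv (Q : QuivRel) (st : SigmaTau Q) : ℕ × ℕ → ℕ := fun pq =>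
  {O : Set Thread | NOrbit Q st O ∧ pN O = pq.1 ∧ qN O = pq.2}.ncard +
  {O : Set ℕ | COrbit Q st O ∧ pq.1 = 0 ∧ O.ncard = pq.2}.ncard

/-- `[p, q] : ℕ² → ℕ`, the characteristic function of `{(p, q)}`. -/
def charFn (p q : ℕ) : ℕ × ℕ → ℕ := fun pq => if pq = (p, q) then 1 else 0

/-- Tree type: `|Δ₀| = |Δ₁| + 1`. -/
def TreeType (Q : QuivRel) : Prop := Q.V.card = Q.A.card + 1

/-- Removing a set of arrows (keeping all vertices); relations containing a
removed arrow are discarded. -/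
def deleteArrows (Q : QuivRel) (S : Finset ℕ) : QuivRel where
  V := Q.V
  A := Q.A \ S
  src := Q.src
  tgt := Q.tgt
  rel := Q.rel.filter fun ρ => ρ.1 ∉ S ∧ ρ.2 ∉ S

/-- Branch arrow: removing it disconnects the quiver. -/
def BranchArrow (Q : QuivRel) (a : ℕ) : Prop :=
  a ∈ Q.A ∧ ¬ Connected (deleteArrows Q {a})

/-- Cycle arrow: removing it leaves the quiver connected. -/
def CycleArrow (Q : QuivRel) (a : ℕ) : Prop :=
  a ∈ Q.A ∧ Connected (deleteArrows Q {a})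

/-- Branch relation: a relation one of whose arrows is a branch arrow. -/
def BranchRel (Q : QuivRel) (ρ : ℕ × ℕ) : Prop :=
  ρ ∈ Q.rel ∧ (BranchArrow Q ρ.1 ∨ BranchArrow Q ρ.2)

/-- A relation `ρ = (α, β)` is isolated if the antipath `(α, β)` is a maximal
antipath, i.e. `ρ ∈ 𝒩`. -/
def Isolated (Q : QuivRel) (st : SigmaTau Q) (ρ : ℕ × ℕ) : Prop :=
  ρ ∈ Q.rel ∧ InN Q st (.arrows [ρ.1, ρ.2])

/-- `Q'` is obtained from `Q` by completing the relations from `R₀`, the new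
arrow attached to `ρ ∈ R₀` being `γ ρ`. -/
structure IsCompletion (Q : QuivRel) (R0 : Finset (ℕ × ℕ)) (γ : ℕ × ℕ → ℕ)
    (Q' : QuivRel) : Prop where
  subset : R0 ⊆ Q.rel
  fresh : ∀ ρ ∈ R0, γ ρ ∉ Q.A
  inj : ∀ ρ ∈ R0, ∀ ρ' ∈ R0, γ ρ = γ ρ' → ρ = ρ'
  V_eq : Q'.V = Q.V
  A_eq : Q'.A = Q.A ∪ R0.image γ
  src_old : ∀ a ∈ Q.A, Q'.src a = Q.src a
  tgt_old : ∀ a ∈ Q.A, Q'.tgt a = Q.tgt a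
  src_new : ∀ ρ ∈ R0, Q'.src (γ ρ) = Q.tgt ρ.1
  tgt_new : ∀ ρ ∈ R0, Q'.tgt (γ ρ) = Q.src ρ.2
  rel_eq : Q'.rel = Q.rel ∪ R0.image (fun ρ => (γ ρ, ρ.1)) ∪
      R0.image (fun ρ => (ρ.2, γ ρ))

/-- A 3-cycle: three pairwise distinct arrows forming an oriented cycle. -/
def Is3Cycle (Q : QuivRel) (a0 a1 a2 : ℕ) : Prop :=
  a0 ∈ Q.A ∧ a1 ∈ Q.A ∧ a2 ∈ Q.A ∧ a0 ≠ a1 ∧ a1 ≠ a2 ∧ a0 ≠ a2 ∧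
  Q.src a0 = Q.tgt a1 ∧ Q.src a1 = Q.tgt a2 ∧ Q.src a2 = Q.tgt a0

/-- A triangle: a 3-cycle all of whose three compositions are relations. -/
def IsTriangleTriple (Q : QuivRel) (a0 a1 a2 : ℕ) : Prop :=
  Is3Cycle Q a0 a1 a2 ∧ (a0, a1) ∈ Q.rel ∧ (a1, a2) ∈ Q.rel ∧ (a2, a0) ∈ Q.rel

/-- The (unordered) set of arrows of a triangle. -/
def TriangleSet (Q : QuivRel) (O : Finset ℕ) : Prop :=
  ∃ a0 a1 a2, O = {a0, a1, a2} ∧ IsTriangleTriple Q a0 a1 a2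

/-- Branch triangle: removing any two of its arrows disconnects the quiver. -/
def BranchTriangle (Q : QuivRel) (O : Finset ℕ) : Prop :=
  TriangleSet Q O ∧ ∀ S ⊆ O, S.card = 2 → ¬ Connected (deleteArrows Q S)

/-- Free relation: a relation neither of whose arrows lies in `𝒞`. -/
def FreeRel (Q : QuivRel) (st : SigmaTau Q) (ρ : ℕ × ℕ) : Prop :=
  ρ ∈ Q.rel ∧ ¬ InC Q st ρ.1 ∧ ¬ InC Q st ρ.2

/-- The class `𝒜`: gentle quivers with `f_𝚫 = m·[0,3] + [p+m+2, p]`. -/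
def ClassA (Q : QuivRel) (st : SigmaTau Q) : Prop :=
  IsGentle Q ∧ ∃ m p : ℕ, ∀ x, fInv Q st x = m * charFn 0 3 x + charFn (p + m + 2) p x

/-- The class `Ã`: gentle quivers with
`f_𝚫 = (m₁+m₂)·[0,3] + [p+m₁, p] + [q+m₂, q]`, `p+m₁ > 0`, `q+m₂ > 0`. -/
def ClassAtilde (Q : QuivRel) (st : SigmaTau Q) : Prop :=
  IsGentle Q ∧ ∃ m1 m2 p q : ℕ, 0 < p + m1 ∧ 0 < q + m2 ∧
    ∀ x, fInv Q st x =
      (m1 + m2) * charFn 0 3 x + charFn (p + m1) p x + charFn (q + m2) q x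

/-- Isomorphism of quivers with relations. -/
def IsoQR (Q Q' : QuivRel) : Prop :=
  ∃ fV fA : ℕ → ℕ,
    Set.BijOn fV ↑Q.V ↑Q'.V ∧ Set.BijOn fA ↑Q.A ↑Q'.A ∧
    (∀ a ∈ Q.A, Q'.src (fA a) = fV (Q.src a) ∧ Q'.tgt (fA a) = fV (Q.tgt a)) ∧
    (∀ a ∈ Q.A, ∀ b ∈ Q.A, ((a, b) ∈ Q.rel ↔ (fA a, fA b) ∈ Q'.rel))

/-- The quiver has no loops. -/
def NoLoops (Q : QuivRel) : Prop := ∀ a ∈ Q.A, Q.src a ≠ Q.tgt a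

/-- The reflection at `x` is defined: every arrow starting at `x` admits a
(necessarily unique) companion arrow ending at `x` not bound by a relation. -/
def CanReflect (Q : QuivRel) (x : ℕ) : Prop :=
  x ∈ Q.V ∧ ∀ a ∈ Q.A, Q.src a = x → ∃ b ∈ Q.A, Q.tgt b = x ∧ (a, b) ∉ Q.rel

/-- `Q'` is the reflection of the gentle loop-free quiver `Q` at the vertex
`x`, following Brenner–Butler tilting. -/
def IsReflection (Q : QuivRel) (x : ℕ) (Q' : QuivRel) : Prop :=
  IsGentle Q ∧ NoLoops Q ∧ CanReflect Q x ∧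
  Q'.V = Q.V ∧ Q'.A = Q.A ∧
  (∀ a ∈ Q.A, Q.tgt a = x → Q'.src a = x ∧ Q'.tgt a = Q.src a) ∧
  (∀ a ∈ Q.A, Q.src a = x →
    ∀ b ∈ Q.A, Q.tgt b = x → (a, b) ∉ Q.rel → Q'.src a = Q.src b) ∧
  (∀ a ∈ Q.A, Q.tgt a ≠ x → Q.src a ≠ x → Q'.src a = Q.src a) ∧
  (∀ a ∈ Q.A, Q.tgt a ≠ x →
    ((∃ b ∈ Q.A, Q.tgt b = x ∧ Q.src b = Q.tgt a ∧ (b, a) ∈ Q.rel) → Q'.tgt a = x) ∧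
    ((¬ ∃ b ∈ Q.A, Q.tgt b = x ∧ Q.src b = Q.tgt a ∧ (b, a) ∈ Q.rel) →
      Q'.tgt a = Q.tgt a)) ∧
  (∀ a b : ℕ, (a, b) ∈ Q'.rel ↔
    (((a, b) ∈ Q.rel ∧ Q.tgt a ≠ x ∧ Q.src a ≠ x) ∨
     (a ∈ Q.A ∧ b ∈ Q.A ∧ Q.src a = x ∧ Q.tgt b = x ∧ (a, b) ∉ Q.rel) ∨
     (a ∈ Q.A ∧ b ∈ Q.A ∧ Q.tgt a = x ∧
       ∃ c ∈ Q.A, c ≠ a ∧ Q.tgt c = x ∧ Q.src c = Q.tgt b ∧ (c, b) ∈ Q.rel)))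

/-- The opposite quiver with relations. -/
def opQR (Q : QuivRel) : QuivRel where
  V := Q.V
  A := Q.A
  src := Q.tgt
  tgt := Q.src
  rel := Q.rel.image fun ρ => (ρ.2, ρ.1)

/-- Coreflection: the dual of reflection. -/
def IsCoreflection (Q : QuivRel) (x : ℕ) (Q' : QuivRel) : Prop :=
  IsReflection (opQR Q) x (opQR Q')

/-- One step of reflection equivalence: a reflection, a coreflection, or an
isomorphism of quivers with relations. -/
def RefStep (Q Q' : QuivRel) : Prop :=
  (∃ x, IsReflection Q x Q') ∨ (∃ x, IsCoreflection Q x Q') ∨ IsoQR Q Q'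

/-- Reflection equivalence: a finite sequence of reflections/coreflections,
up to isomorphism of quivers with relations. -/
def RefEquiv : QuivRel → QuivRel → Prop := Relation.ReflTransGen RefStep

/-- A cyclic orientation of a `1`-cycle quiver without branch arrows (i.e. a
cycle): enumerations of the vertices and arrows by `ZMod n` such that the
`i`-th arrow joins the `i`-th and `(i+1)`-st vertices. -/
structure CyclicOrientation (Q : QuivRel) (n : ℕ) where
  ev : ZMod n → ℕ
  ea : ZMod n → ℕ
  ev_mem : ∀ i, ev i ∈ Q.V
  ea_mem : ∀ i, ea i ∈ Q.A
  ev_inj : Function.Injective ev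
  ea_inj : Function.Injective ea
  ev_surj : ∀ v ∈ Q.V, ∃ i, ev i = v
  ea_surj : ∀ a ∈ Q.A, ∃ i, ea i = a
  compat : ∀ i : ZMod n,
    (Q.src (ea i) = ev i ∧ Q.tgt (ea i) = ev (i + 1)) ∨
    (Q.src (ea i) = ev (i + 1) ∧ Q.tgt (ea i) = ev i)

/-- Clockwise arrow with respect to a cyclic orientation. -/
def Clockwise (Q : QuivRel) {n : ℕ} (co : CyclicOrientation Q n) (a : ℕ) : Prop :=
  a ∈ Q.A ∧ ∃ i : ZMod n, co.ea i = a ∧ Q.src a = co.ev i ∧ Q.tgt a = co.ev (i + 1)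

/-- Anticlockwise arrow with respect to a cyclic orientation. -/
def Anticlockwise (Q : QuivRel) {n : ℕ} (co : CyclicOrientation Q n) (a : ℕ) : Prop :=
  a ∈ Q.A ∧ ∃ i : ZMod n, co.ea i = a ∧ Q.src a = co.ev (i + 1) ∧ Q.tgt a = co.ev i

end GentleQuiv

namespace GentleQuiv

/-! Counting the pairs `(x, ε) ∈ Δ₀ × {±1}` gives `|𝒩| + |Δ₁| ≤ 2 |Δ₀|`, and every arrow lies in a
maximal antipath or in `𝒞`. Both counts are read off from `f_𝚫`, and for `𝚫 ∈ Ã` they combine to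
`|Δ₁| ≤ |Δ₀| + |𝒞/ℤ|`.

If `Δ ∖ 𝒪` were connected, one arrow could also be deleted from every other orbit in `𝒞/ℤ`, as
the rest of such an orbit joins the ends of the deleted arrow. The resulting connected quiver would
have at most `|Δ₁| - |𝒞/ℤ| - 2 < |Δ₀| - 1` arrows, which is impossible. So `Δ ∖ 𝒪` is disconnected.

Since `𝒪` is not a branch triangle, some `γ ∈ 𝒪` has its ends joined by a walk in `Δ ∖ 𝒪`, and
`Δ ∖ {γ}` has no branch arrows. If another `δ ∈ 𝒪` shared this property, then deleting `δ`, the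
third arrow of `𝒪` and finally `γ` would leave `Δ ∖ 𝒪` connected. -/

section Walks

variable {Q Q' : QuivRel} {S T : Finset ℕ} {x y a : ℕ}

/-- Two vertices are linked if a walk joins them, so that `Connected Q` says that any two vertices
of `Q` are linked. -/
abbrev Linked (Q : QuivRel) : ℕ → ℕ → Prop := Relation.ReflTransGen (Adj Q)

theorem Linked.symm (h : Linked Q x y) : Linked Q y x :=
  have : Std.Symm (Adj Q) := ⟨fun _ _ ⟨a, ha, hxy⟩ => ⟨a, ha, hxy.symm⟩⟩
  symm_of (Relation.ReflTransGen (Adj Q)) h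

theorem linked_src_tgt (ha : a ∈ Q.A) : Linked Q (Q.src a) (Q.tgt a) :=
  .single ⟨a, ha, .inl ⟨rfl, rfl⟩⟩

theorem Linked.of_forall_arrow (H : ∀ a ∈ Q.A, Linked Q' (Q.src a) (Q.tgt a))
    (h : Linked Q x y) : Linked Q' x y := by
  induction h with
  | refl => exact .refl
  | tail _ hyz ih =>
    obtain ⟨a, ha, ⟨rfl, rfl⟩ | ⟨rfl, rfl⟩⟩ := hyz
    · exact ih.trans (H a ha)
    · exact ih.trans (H a ha).symm

theorem Linked.deleteArrows_of_subset (hST : S ⊆ T) (h : Linked (deleteArrows Q T) x y) :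
    Linked (deleteArrows Q S) x y :=
  Linked.of_forall_arrow (Q := deleteArrows Q T) (fun _ ha =>
    linked_src_tgt (Q := deleteArrows Q S) (Finset.sdiff_subset_sdiff subset_rfl hST ha)) h

theorem deleteArrows_deleteArrows :
    deleteArrows (deleteArrows Q S) T = deleteArrows Q (S ∪ T) := by
  simp only [deleteArrows, Finset.sdiff_sdiff_left', Finset.filter_filter, Finset.notMem_union,
    QuivRel.mk.injEq, true_and]
  exact ⟨by grind, by grind⟩

theorem Connected.deleteArrows (h : Connected Q)
    (hT : ∀ c ∈ T, Linked (deleteArrows Q T) (Q.src c) (Q.tgt c)) :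
    Connected (deleteArrows Q T) := fun x hx y hy =>
  Linked.of_forall_arrow (fun a ha =>
    if haT : a ∈ T then hT a haT
    else linked_src_tgt (Q := GentleQuiv.deleteArrows Q T) (Finset.mem_sdiff.2 ⟨ha, haT⟩))
    (h x hx y hy)

theorem Connected.deleteArrows_singleton (h : Connected Q)
    (ha : Linked (GentleQuiv.deleteArrows Q {a}) (Q.src a) (Q.tgt a)) :
    Connected (GentleQuiv.deleteArrows Q {a}) :=
  h.deleteArrows fun _ hc => by rwa [Finset.mem_singleton.1 hc]

theorem Linked.deleteArrows_singleton_or (c : ℕ) (h : Linked Q x y) :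
    Linked (deleteArrows Q {c}) x y ∨
      Linked (deleteArrows Q {c}) x (Q.src c) ∨ Linked (deleteArrows Q {c}) x (Q.tgt c) := by
  induction h with
  | refl => exact .inl .refl
  | @tail y z _ hyz ih =>
    rcases ih with hxy | hxc
    · obtain ⟨a, ha, hends⟩ := hyz
      by_cases hac : a = c
      · subst hac
        rcases hends with ⟨rfl, -⟩ | ⟨-, rfl⟩
        · exact .inr (.inl hxy)
        · exact .inr (.inr hxy)
      · exact .inl (hxy.tail ⟨a, by simp [GentleQuiv.deleteArrows, ha, hac], hends⟩)
    · exact .inr hxc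

/-- The simple graph on the vertices of `Q` obtained by forgetting orientations, multiplicities and
loops; it carries `Q` into the graph library. -/
def underlyingGraph (Q : QuivRel) : SimpleGraph Q.V := .fromRel fun v w => Adj Q v w

theorem Linked.exists_reachable_underlyingGraph
    (hV : ∀ a ∈ Q.A, Q.src a ∈ Q.V ∧ Q.tgt a ∈ Q.V) (hx : x ∈ Q.V) (h : Linked Q x y) :
    ∃ hy : y ∈ Q.V, (underlyingGraph Q).Reachable ⟨x, hx⟩ ⟨y, hy⟩ := by
  induction h with
  | refl => exact ⟨hx, .rfl⟩
  | @tail y z _ hyz ih =>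
    obtain ⟨hy, hreach⟩ := ih
    have hz : z ∈ Q.V := by
      obtain ⟨a, ha, ⟨-, rfl⟩ | ⟨rfl, -⟩⟩ := hyz
      exacts [(hV a ha).2, (hV a ha).1]
    refine ⟨hz, ?_⟩
    by_cases hne : y = z
    · subst hne
      exact hreach
    · exact hreach.trans (SimpleGraph.Adj.reachable
        ((SimpleGraph.fromRel_adj _ _ _).2 ⟨fun h => hne (congrArg Subtype.val h), .inl hyz⟩))

theorem card_edgeSet_underlyingGraph_le :
    Nat.card (underlyingGraph Q).edgeSet ≤ Q.A.card := by
  classical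
  have hedges : Sym2.map Subtype.val '' (underlyingGraph Q).edgeSet ⊆
      (Q.A.image fun a => s(Q.src a, Q.tgt a) : Finset (Sym2 ℕ)) := by
    rintro _ ⟨e, he, rfl⟩
    induction e with | h v w =>
    rw [SimpleGraph.mem_edgeSet, underlyingGraph, SimpleGraph.fromRel_adj] at he
    obtain ⟨-, ⟨a, ha, hends⟩ | ⟨a, ha, hends⟩⟩ := he <;>
      exact Finset.mem_coe.2 (Finset.mem_image.2 ⟨a, ha, by
        simpa [and_comm, or_comm] using hends⟩)
  calc Nat.card (underlyingGraph Q).edgeSet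
      = (Sym2.map Subtype.val '' (underlyingGraph Q).edgeSet).ncard := by
        rw [Set.ncard_image_of_injective _ (Sym2.map.injective Subtype.val_injective),
          Nat.card_coe_set_eq]
    _ ≤ (Q.A.image fun a => s(Q.src a, Q.tgt a)).card := by
        rw [← Set.ncard_coe_finset]
        exact Set.ncard_le_ncard hedges
    _ ≤ Q.A.card := Finset.card_image_le

theorem Connected.card_vertices_le (hne : Q.V.Nonempty)
    (hV : ∀ a ∈ Q.A, Q.src a ∈ Q.V ∧ Q.tgt a ∈ Q.V) (h : Connected Q) :
    Q.V.card ≤ Q.A.card + 1 := by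
  have : Nonempty Q.V := hne.to_subtype
  have hG : (underlyingGraph Q).Connected :=
    ⟨fun v w => (Linked.exists_reachable_underlyingGraph hV v.2 (h v v.2 w w.2)).2⟩
  calc Q.V.card = Nat.card Q.V := by simp
    _ ≤ Nat.card (underlyingGraph Q).edgeSet + 1 := hG.card_vert_le_card_edgeSet_add_one
    _ ≤ Q.A.card + 1 := Nat.add_le_add_right card_edgeSet_underlyingGraph_le 1

end Walks

section ThreeCycles

variable {Q : QuivRel} {a0 a1 a2 g : ℕ}

theorem Is3Cycle.exists_rotation (h : Is3Cycle Q a0 a1 a2)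
    (hg : g ∈ ({a0, a1, a2} : Finset ℕ)) :
    ∃ b c, ({a0, a1, a2} : Finset ℕ) = {g, b, c} ∧ Is3Cycle Q g b c := by
  obtain ⟨h0, h1, h2, h01, h12, h02, h01', h12', h20'⟩ := h
  simp only [Finset.mem_insert, Finset.mem_singleton] at hg
  rcases hg with rfl | rfl | rfl
  · exact ⟨a1, a2, rfl, h0, h1, h2, h01, h12, h02, h01', h12', h20'⟩
  · exact ⟨a2, a0, by grind, h1, h2, h0, h12, h02.symm, h01.symm, h12', h20', h01'⟩
  · exact ⟨a0, a1, by grind, h2, h0, h1, h02.symm, h01, h12.symm, h20', h01', h12'⟩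

theorem Is3Cycle.exists_linked_deleteArrows (h : Is3Cycle Q a0 a1 a2)
    (hV : ∀ a ∈ Q.A, Q.src a ∈ Q.V) (hconn : Connected (deleteArrows Q {a1, a2})) :
    ∃ g ∈ ({a0, a1, a2} : Finset ℕ),
      Linked (deleteArrows Q {a0, a1, a2}) (Q.src g) (Q.tgt g) := by
  obtain ⟨h0, h1, -, -, -, -, h01, h12, h20⟩ := h
  have hsplit := Linked.deleteArrows_singleton_or a0 (hconn _ (hV a1 h1) _ (hV a0 h0))
  rw [deleteArrows_deleteArrows, Finset.union_singleton] at hsplit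
  replace hsplit : Linked (deleteArrows Q {a0, a1, a2}) (Q.src a1) (Q.src a0) ∨
      Linked (deleteArrows Q {a0, a1, a2}) (Q.src a1) (Q.tgt a0) := by tauto
  rcases hsplit with hsrc | htgt
  · exact ⟨a1, by simp, h01 ▸ hsrc⟩
  · exact ⟨a2, by simp, h20 ▸ h12 ▸ htgt.symm⟩

theorem Is3Cycle.not_branchArrow_deleteArrows {b c : ℕ} (h : Is3Cycle Q g b c)
    (hQ : ∀ a, ¬ BranchArrow Q a)
    (hg : Linked (deleteArrows Q {g, b, c}) (Q.src g) (Q.tgt g)) (a : ℕ) :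
    ¬ BranchArrow (deleteArrows Q {g}) a := by
  rintro ⟨ha, hdisc⟩
  obtain ⟨haA, -⟩ := Finset.mem_sdiff.1 ha
  obtain ⟨-, hb, hc, hgb, -, hgc, hgb', hbc', hcg'⟩ := h
  have hconn : Connected (deleteArrows Q {a}) := not_not.1 fun hn => hQ a ⟨haA, hn⟩
  have hlink : Linked (deleteArrows Q {a, g}) (Q.src g) (Q.tgt g) := by
    by_cases habc : a = b ∨ a = c
    · exact hg.deleteArrows_of_subset (by grind)
    · have hb' : b ∈ (deleteArrows Q {a, g}).A := Finset.mem_sdiff.2 ⟨hb, by grind⟩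
      have hc' : c ∈ (deleteArrows Q {a, g}).A := Finset.mem_sdiff.2 ⟨hc, by grind⟩
      have hback : Linked _ _ _ := (linked_src_tgt hc').trans (hbc' ▸ linked_src_tgt hb')
      exact hgb' ▸ hcg' ▸ hback.symm
  apply hdisc
  rw [deleteArrows_deleteArrows, Finset.union_comm, ← deleteArrows_deleteArrows]
  rw [← Finset.singleton_union, ← deleteArrows_deleteArrows] at hlink
  exact hconn.deleteArrows_singleton hlink

theorem Is3Cycle.connected_deleteArrows_of_linked (h : Is3Cycle Q a0 a1 a2) {g γ : ℕ}
    (hg : g ∈ ({a0, a1, a2} : Finset ℕ)) (hγ : γ ∈ ({a0, a1, a2} : Finset ℕ)) (hne : g ≠ γ)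
    (hgQ : ∀ a, ¬ BranchArrow (deleteArrows Q {g}) a)
    (hlink : Linked (deleteArrows Q {a0, a1, a2}) (Q.src γ) (Q.tgt γ)) :
    Connected (deleteArrows Q {a0, a1, a2}) := by
  obtain ⟨e, he, heg, hO⟩ :
      ∃ e ∈ Q.A, e ≠ g ∧ ({a0, a1, a2} : Finset ℕ) = {g} ∪ {e} ∪ {γ} := by
    obtain ⟨h0, h1, h2, -⟩ := h
    grind
  have hconn : Connected (deleteArrows Q ({g} ∪ {e})) := by
    rw [← deleteArrows_deleteArrows]
    exact not_not.1 fun hn => hgQ e ⟨Finset.mem_sdiff.2 ⟨he, by simpa using heg⟩, hn⟩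
  rw [hO, ← deleteArrows_deleteArrows] at hlink ⊢
  exact hconn.deleteArrows_singleton hlink

theorem Is3Cycle.exists_linked_of_connected_deleteArrows_pair (h : Is3Cycle Q a0 a1 a2)
    (hV : ∀ a ∈ Q.A, Q.src a ∈ Q.V) {S : Finset ℕ} (hS : S ⊆ {a0, a1, a2}) (hcard : S.card = 2)
    (hconn : Connected (deleteArrows Q S)) :
    ∃ g ∈ ({a0, a1, a2} : Finset ℕ),
      Linked (deleteArrows Q {a0, a1, a2}) (Q.src g) (Q.tgt g) := by
  obtain ⟨c, hc, rfl⟩ : ∃ c ∈ ({a0, a1, a2} : Finset ℕ), S = {a0, a1, a2} \ {c} := by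
    have ⟨_, _, _, h01, h12, h02, _⟩ := h
    obtain ⟨c, hc⟩ := Finset.card_eq_one.1 (show (({a0, a1, a2} : Finset ℕ) \ S).card = 1 by
      rw [Finset.card_sdiff_of_subset hS, Finset.card_eq_three.2 ⟨_, _, _, h01, h02, h12, rfl⟩,
        hcard])
    have hcO : c ∈ ({a0, a1, a2} : Finset ℕ) \ S := hc ▸ Finset.mem_singleton_self c
    exact ⟨c, (Finset.mem_sdiff.1 hcO).1, by rw [← hc, Finset.sdiff_sdiff_eq_self hS]⟩
  obtain ⟨b, d, hrot, hcycle⟩ := h.exists_rotation hc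
  rw [hrot] at hconn ⊢
  have hbd : ({c, b, d} : Finset ℕ) \ {c} = {b, d} := by
    have ⟨_, _, _, hcb, _, hcd, _⟩ := hcycle
    grind
  exact hcycle.exists_linked_deleteArrows hV (hbd ▸ hconn)

theorem Is3Cycle.existsUnique_not_branchArrow (h : Is3Cycle Q a0 a1 a2)
    (hV : ∀ a ∈ Q.A, Q.src a ∈ Q.V) (hQ : ∀ a, ¬ BranchArrow Q a)
    (hpair : ∃ S ⊆ ({a0, a1, a2} : Finset ℕ), S.card = 2 ∧ Connected (deleteArrows Q S))
    (hdisc : ¬ Connected (deleteArrows Q {a0, a1, a2})) :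
    ∃! g, g ∈ ({a0, a1, a2} : Finset ℕ) ∧ ∀ a, ¬ BranchArrow (deleteArrows Q {g}) a := by
  obtain ⟨S, hS, hcard, hconn⟩ := hpair
  obtain ⟨γ, hγ, hlink⟩ := h.exists_linked_of_connected_deleteArrows_pair hV hS hcard hconn
  refine ⟨γ, ⟨hγ, ?_⟩, fun g ⟨hg, hgQ⟩ => ?_⟩
  · obtain ⟨b, c, hrot, hcycle⟩ := h.exists_rotation hγ
    exact hcycle.not_branchArrow_deleteArrows hQ (hrot ▸ hlink)
  · by_contra hne
    exact hdisc (h.connected_deleteArrows_of_linked hg hγ hne hgQ hlink)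

end ThreeCycles

section Relations

open Relation

variable {α : Type*} {r : α → α → Prop} {a b x z : α} {l m : List α}

theorem exists_terminal_of_not_transGen (hr : Relator.LeftUnique r) {s : Set α} (hs : s.Finite)
    (hrs : ∀ ⦃x y⦄, r x y → y ∈ s) (ha : ¬ TransGen r a a) :
    ∃ z, ReflTransGen r a z ∧ ∀ y, ¬ r z y := by
  by_contra! hsucc
  choose! succ hsucc using hsucc
  let reach : Set α := {x | ReflTransGen r a x}
  have hfin : reach.Finite := (hs.insert a).subset fun x hx => by
    obtain rfl | ⟨_, _, hx⟩ := ReflTransGen.cases_tail_iff r a x |>.1 hx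
    exacts [.inl rfl, .inr (hrs hx)]
  have hmaps : Set.MapsTo succ reach reach := fun x hx => hx.tail (hsucc x hx)
  have hinj : Set.InjOn succ reach := fun x hx y hy hxy =>
    hr (hsucc x hx) (hxy ▸ hsucc y hy)
  obtain ⟨y, hy, rfl⟩ := ((hfin.injOn_iff_bijOn_of_mapsTo hmaps).1 hinj).surjOn
    (show a ∈ reach from .refl)
  exact ha (.tail' hy (hsucc y hy))

theorem transGen_self_of_reflTransGen (hr : Relator.RightUnique r) (ha : TransGen r a a)
    (hab : ReflTransGen r a b) : TransGen r b b := by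
  induction hab with
  | refl => exact ha
  | tail _ hbc ih =>
    obtain ⟨c, hbc', hcb⟩ := TransGen.head'_iff.1 ih
    obtain rfl := hr hbc hbc'
    exact .tail' hcb hbc

theorem exists_isChain_cons_mem_of_reflTransGen (hxa : ReflTransGen r x a)
    (haz : ReflTransGen r a z) :
    ∃ l, (x :: l).IsChain r ∧ a ∈ x :: l ∧ (x :: l).getLast (List.cons_ne_nil x l) = z := by
  induction hxa using ReflTransGen.head_induction_on with
  | refl =>
    obtain ⟨l, hl, hlast⟩ := List.exists_isChain_cons_of_relationReflTransGen haz
    exact ⟨l, hl, List.mem_cons_self, hlast⟩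
  | @head x y hxy _ ih =>
    obtain ⟨l, hl, ha, hlast⟩ := ih
    exact ⟨y :: l, hl.cons_cons hxy, List.mem_cons_of_mem x ha, by simpa using hlast⟩

theorem reflTransGen_getLast_of_isChain (hl : l.IsChain r) (ha : a ∈ l) :
    ReflTransGen r a (l.getLast (List.ne_nil_of_mem ha)) :=
  hl.backwards_induction (fun x => ReflTransGen r x (l.getLast (List.ne_nil_of_mem ha))) l
    (fun _ _ hxy hy => hy.head hxy) (fun _ => .refl) a ha

theorem eq_of_isChain_cons_of_terminal (hr : Relator.RightUnique r)
    (hl : (a :: l).IsChain r) (hm : (a :: m).IsChain r)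
    (hl' : ∀ y, ¬ r ((a :: l).getLast (List.cons_ne_nil a l)) y)
    (hm' : ∀ y, ¬ r ((a :: m).getLast (List.cons_ne_nil a m)) y) : l = m := by
  induction l generalizing a m with
  | nil =>
    cases m with
    | nil => rfl
    | cons b m => exact absurd (List.isChain_cons_cons.1 hm).1 (hl' b)
  | cons b l ih =>
    cases m with
    | nil => exact absurd (List.isChain_cons_cons.1 hl).1 (hm' b)
    | cons c m =>
      rw [List.isChain_cons_cons] at hl hm
      obtain rfl := hr hl.1 hm.1
      rw [List.getLast_cons_cons] at hl' hm'
      rw [ih hl.2 hm.2 hl' hm']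

end Relations

section Antipaths

open Relation

variable {Q : QuivRel} {a b : ℕ} {l : List ℕ} {w w' : Thread}

/-- The relations of a quiver as a binary relation on its arrows, so that antipaths of positive
length are the chains for `Rel Q`. -/
abbrev Rel (Q : QuivRel) (a b : ℕ) : Prop := (a, b) ∈ Q.rel

theorem IsGentle.endpoints_mem (hQ : IsGentle Q) : ∀ a ∈ Q.A, Q.src a ∈ Q.V ∧ Q.tgt a ∈ Q.V :=
  hQ.2.1

theorem IsGentle.left_mem (hQ : IsGentle Q) (hab : Rel Q a b) : a ∈ Q.A :=
  (hQ.2.2.2.1 _ hab).1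

theorem IsGentle.right_mem (hQ : IsGentle Q) (hab : Rel Q a b) : b ∈ Q.A :=
  (hQ.2.2.2.1 _ hab).2.1

theorem IsGentle.src_eq_tgt (hQ : IsGentle Q) (hab : Rel Q a b) : Q.src a = Q.tgt b :=
  (hQ.2.2.2.1 _ hab).2.2

theorem IsGentle.mem_of_reflTransGen_left (hQ : IsGentle Q) (hb : b ∈ Q.A)
    (hab : ReflTransGen (Rel Q) a b) : a ∈ Q.A := by
  obtain rfl | ⟨_, hac, -⟩ := hab.cases_head
  exacts [hb, hQ.left_mem hac]

theorem IsGentle.mem_of_reflTransGen_right (hQ : IsGentle Q) (ha : a ∈ Q.A)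
    (hab : ReflTransGen (Rel Q) a b) : b ∈ Q.A := by
  obtain rfl | ⟨_, -, hcb⟩ := hab.cases_tail
  exacts [ha, hQ.right_mem hcb]

theorem IsGentle.leftUnique_rel (hQ : IsGentle Q) : Relator.LeftUnique (Rel Q) := by
  obtain ⟨-, -, -, -, -, -, -, -, hpred, -⟩ := id hQ
  intro a b c ha hb
  exact Finset.card_le_one.1 (hpred c (hQ.right_mem ha)) a
    (Finset.mem_filter.2 ⟨hQ.left_mem ha, ha⟩) b (Finset.mem_filter.2 ⟨hQ.left_mem hb, hb⟩)

theorem IsGentle.rightUnique_rel (hQ : IsGentle Q) : Relator.RightUnique (Rel Q) := by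
  obtain ⟨-, -, -, -, -, -, -, -, -, hsucc, -⟩ := id hQ
  intro a b c hb hc
  exact Finset.card_le_one.1 (hsucc a (hQ.left_mem hb)) b
    (Finset.mem_filter.2 ⟨hQ.right_mem hb, hb⟩) c (Finset.mem_filter.2 ⟨hQ.right_mem hc, hc⟩)

theorem IsGentle.rel_iff (hQ : IsGentle Q) (st : SigmaTau Q) :
    Rel Q a b ↔ a ∈ Q.A ∧ b ∈ Q.A ∧ Q.src a = Q.tgt b ∧ st.σ a = st.τ b := by
  refine ⟨fun hab => ?_, fun ⟨ha, hb, hab, hst⟩ => (st.rel_iff a ha b hb hab).2 hst⟩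
  have ha := hQ.left_mem hab
  have hb := hQ.right_mem hab
  exact ⟨ha, hb, hQ.src_eq_tgt hab, (st.rel_iff a ha b hb (hQ.src_eq_tgt hab)).1 hab⟩

theorem IsGentle.inN_arrows_cons_iff (hQ : IsGentle Q) (st : SigmaTau Q) :
    InN Q st (.arrows (a :: l)) ↔
      (∀ b ∈ a :: l, b ∈ Q.A) ∧ (a :: l).IsChain (Rel Q) ∧ (∀ b, ¬ Rel Q b a) ∧
        ∀ b, ¬ Rel Q ((a :: l).getLast (List.cons_ne_nil a l)) b := by
  have hlast : (a :: l).getLast! = (a :: l).getLast (List.cons_ne_nil a l) :=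
    List.getLast!_of_getLast? (List.getLast?_eq_getLast_of_ne_nil _)
  have hmem : (a :: l).getLast (List.cons_ne_nil a l) ∈ a :: l := List.getLast_mem _
  simp only [InN, IsAntiThread, IsAntiList, Thread.target, Thread.tauAnti, Thread.source,
    Thread.sigma, hlast, List.head!_cons]
  generalize (a :: l).getLast (List.cons_ne_nil a l) = z at hmem
  constructor
  · rintro ⟨⟨-, hA, hchain⟩, hhead, hterm⟩
    refine ⟨hA, hchain, fun b hb => hhead ?_, fun b hb => hterm ?_⟩
    · obtain ⟨hbA, -, hsrc, hσ⟩ := (hQ.rel_iff st).1 hb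
      exact ⟨b, hbA, hsrc, hσ⟩
    · obtain ⟨-, hbA, hsrc, hσ⟩ := (hQ.rel_iff st).1 hb
      exact ⟨b, hbA, hsrc.symm, hσ.symm⟩
  · rintro ⟨hA, hchain, hhead, hterm⟩
    exact ⟨⟨List.cons_ne_nil a l, hA, hchain⟩,
      fun ⟨b, hb, hsrc, hσ⟩ => hhead b ((hQ.rel_iff st).2
        ⟨hb, hA a List.mem_cons_self, hsrc, hσ⟩),
      fun ⟨b, hb, htgt, hτ⟩ => hterm b ((hQ.rel_iff st).2
        ⟨hA z hmem, hb, htgt.symm, hτ.symm⟩)⟩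

theorem IsGentle.inC_iff_transGen (hQ : IsGentle Q) (st : SigmaTau Q) :
    InC Q st a ↔ TransGen (Rel Q) a a := by
  have hleft : Relator.LeftUnique (Rel Q) := hQ.leftUnique_rel
  have hright : Relator.RightUnique (Rel Q) := hQ.rightUnique_rel
  have hswap : Relator.LeftUnique (Function.swap (Rel Q)) := fun _ _ _ hb hc => hright hb hc
  constructor
  · rintro ⟨ha, hfree⟩
    by_contra hcyc
    obtain ⟨z, haz, hz⟩ := exists_terminal_of_not_transGen hleft Q.A.finite_toSet
      (fun _ _ => hQ.right_mem) hcyc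
    obtain ⟨x, hax, hx⟩ := exists_terminal_of_not_transGen hswap Q.A.finite_toSet
      (fun _ _ => hQ.left_mem) (transGen_swap.not.2 hcyc)
    obtain ⟨l, hchain, hal, rfl⟩ :=
      exists_isChain_cons_mem_of_reflTransGen (reflTransGen_swap.1 hax) haz
    have hmem : ∀ b ∈ x :: l, b ∈ Q.A := fun b hb =>
      hQ.mem_of_reflTransGen_left (hQ.mem_of_reflTransGen_right ha haz)
        (reflTransGen_getLast_of_isChain hchain hb)
    exact hfree ⟨x :: l, (hQ.inN_arrows_cons_iff st).2 ⟨hmem, hchain, hx, hz⟩, hal⟩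
  · intro hcyc
    obtain ⟨b, hab, -⟩ := TransGen.head'_iff.1 hcyc
    refine ⟨hQ.left_mem hab, ?_⟩
    rintro ⟨_ | ⟨x, l⟩, hN, hal⟩
    · exact List.not_mem_nil hal
    · obtain ⟨-, hchain, -, hterm⟩ := (hQ.inN_arrows_cons_iff st).1 hN
      obtain ⟨y, hy, -⟩ := TransGen.head'_iff.1 (transGen_self_of_reflTransGen hright hcyc
        (reflTransGen_getLast_of_isChain hchain hal))
      exact hterm y hy

theorem IsGentle.psiRel_of_rel (hQ : IsGentle Q) (st : SigmaTau Q) (ha : InC Q st a)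
    (hab : Rel Q a b) : PsiRel Q st a b := by
  have hcyc := transGen_self_of_reflTransGen hQ.rightUnique_rel ((hQ.inC_iff_transGen st).1 ha)
    (.single hab)
  obtain ⟨-, -, hsrc, hσ⟩ := (hQ.rel_iff st).1 hab
  exact ⟨ha, (hQ.inC_iff_transGen st).2 hcyc, hsrc.symm, hσ.symm⟩

theorem IsGentle.eqvGen_psiRel_of_reflTransGen (hQ : IsGentle Q) (st : SigmaTau Q)
    (ha : InC Q st a) (hab : ReflTransGen (Rel Q) a b) : EqvGen (PsiRel Q st) a b := by
  induction hab using ReflTransGen.head_induction_on with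
  | refl => exact .refl _
  | head hac _ ih =>
    have hpsi := hQ.psiRel_of_rel st ha hac
    exact .trans _ _ _ (.rel _ _ hpsi) (ih hpsi.2.1)

theorem IsGentle.linked_deleteArrows_of_inC (hQ : IsGentle Q) (st : SigmaTau Q)
    (ha : InC Q st a) {D : Finset ℕ} (hD : ∀ b ∈ D, EqvGen (PsiRel Q st) b a → b = a) :
    Linked (deleteArrows Q D) (Q.src a) (Q.tgt a) := by
  obtain ⟨c, hac, hca⟩ := TransGen.head'_iff.1 ((hQ.inC_iff_transGen st).1 ha)
  have hc : InC Q st c := (hQ.psiRel_of_rel st ha hac).2.1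
  rw [hQ.src_eq_tgt hac]
  clear hac
  induction hca using ReflTransGen.head_induction_on with
  | refl => exact .refl
  | @head b c hbc hca ih =>
    by_cases hba : b = a
    · exact hba ▸ .refl
    have hbD : b ∉ D := fun hb =>
      hba (hD b hb (hQ.eqvGen_psiRel_of_reflTransGen st hc (hca.head hbc)))
    have hstep : Linked (deleteArrows Q D) (Q.src b) (Q.tgt b) :=
      linked_src_tgt (Q := deleteArrows Q D) (Finset.mem_sdiff.2 ⟨hc.1, hbD⟩)
    exact (hQ.src_eq_tgt hbc ▸ hstep.symm).trans (ih (hQ.psiRel_of_rel st hc hbc).2.1)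

theorem SigmaTau.eq_of_src_of_σ (st : SigmaTau Q) (ha : a ∈ Q.A) (hb : b ∈ Q.A)
    (hsrc : Q.src a = Q.src b) (hσ : st.σ a = st.σ b) : a = b := by
  by_contra hab
  have hopp := st.σ_src a ha b hb hab hsrc
  have hpm := st.σ_pm b hb
  lia

theorem SigmaTau.eq_of_tgt_of_τ (st : SigmaTau Q) (ha : a ∈ Q.A) (hb : b ∈ Q.A)
    (htgt : Q.tgt a = Q.tgt b) (hτ : st.τ a = st.τ b) : a = b := by
  by_contra hab
  have hopp := st.τ_tgt a ha b hb hab htgt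
  have hpm := st.τ_pm b hb
  lia

theorem IsGentle.injOn_target_tauAnti (hQ : IsGentle Q) (st : SigmaTau Q) :
    Set.InjOn (fun w : Thread => (w.target Q, w.tauAnti st)) {w | InN Q st w} := by
  have triv_ne {x ε b m} (htriv : InN Q st (.triv x ε)) (harr : InN Q st (.arrows (b :: m))) :
      ¬ (x = Q.tgt b ∧ ε = st.τ b) := fun ⟨hx, hε⟩ =>
    htriv.2.2 ⟨b, harr.1.2.1 b List.mem_cons_self, hx.symm, hε.symm⟩
  rintro (⟨x, ε⟩ | _ | ⟨a, l⟩) hw (⟨y, δ⟩ | _ | ⟨b, m⟩) hw' heq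
  · exact congrArg (fun p : ℕ × ℤ => Thread.triv p.1 p.2) heq
  · exact absurd rfl hw'.1.1
  · exact absurd (Prod.mk.inj heq) (triv_ne hw hw')
  · exact absurd rfl hw.1.1
  · rfl
  · exact absurd rfl hw.1.1
  · exact absurd (Prod.mk.inj heq.symm) (triv_ne hw' hw)
  · exact absurd rfl hw'.1.1
  · obtain ⟨hA, hchain, -, hterm⟩ := (hQ.inN_arrows_cons_iff st).1 hw
    obtain ⟨hA', hchain', -, hterm'⟩ := (hQ.inN_arrows_cons_iff st).1 hw'
    obtain ⟨htgt, hτ⟩ := Prod.mk.inj heq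
    obtain rfl := st.eq_of_tgt_of_τ (hA a List.mem_cons_self) (hA' b List.mem_cons_self) htgt hτ
    rw [eq_of_isChain_cons_of_terminal hQ.rightUnique_rel hchain hchain' hterm hterm']

theorem IsGentle.target_tauAnti_mem (hQ : IsGentle Q) (st : SigmaTau Q) (hw : InN Q st w) :
    (w.target Q, w.tauAnti st) ∈ Q.V ×ˢ ({1, -1} : Finset ℤ) := by
  match w, hw with
  | .triv x ε, hw => simpa [Thread.target, Thread.tauAnti, IsAntiThread] using hw.1
  | .arrows [], hw => exact absurd rfl hw.1.1
  | .arrows (a :: l), hw =>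
    have ha : a ∈ Q.A := hw.1.2.1 a List.mem_cons_self
    simpa [Thread.target, Thread.tauAnti] using ⟨(hQ.endpoints_mem a ha).2, st.τ_pm a ha⟩

theorem IsGentle.finite_setOf_inN (hQ : IsGentle Q) (st : SigmaTau Q) :
    {w | InN Q st w}.Finite :=
  .of_injOn (fun _ => hQ.target_tauAnti_mem st) (hQ.injOn_target_tauAnti st)
    (Finset.finite_toSet _)

/-- The set `𝒩` of maximal antipaths, as a `Finset`. -/
noncomputable def maxAntipaths (hQ : IsGentle Q) (st : SigmaTau Q) : Finset Thread :=
  (hQ.finite_setOf_inN st).toFinset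

open Classical in
/-- The set `𝒞` of arrows avoiding all maximal antipaths, as a `Finset`. -/
noncomputable def antipathFreeArrows (Q : QuivRel) (st : SigmaTau Q) : Finset ℕ :=
  Q.A.filter (InC Q st)

theorem mem_maxAntipaths {hQ : IsGentle Q} {st : SigmaTau Q} :
    w ∈ maxAntipaths hQ st ↔ InN Q st w :=
  Set.Finite.mem_toFinset _

theorem mem_antipathFreeArrows {st : SigmaTau Q} :
    a ∈ antipathFreeArrows Q st ↔ InC Q st a := by
  simp only [antipathFreeArrows, Finset.mem_filter, and_iff_right_iff_imp]
  exact And.left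

-- Each of the `2 |Δ₀|` pairs `(x, ε)` is `(t ω, τ ω)` for at most one `ω ∈ 𝒩` or `(s α, σ α)` for
-- at most one arrow `α`, and maximality of `ω` excludes that both happen.
theorem card_maxAntipaths_add_card_arrows_le (hQ : IsGentle Q) (st : SigmaTau Q) :
    (maxAntipaths hQ st).card + Q.A.card ≤ 2 * Q.V.card := by
  let terminus (w : Thread) : ℕ × ℤ := (w.target Q, w.tauAnti st)
  let origin (a : ℕ) : ℕ × ℤ := (Q.src a, st.σ a)
  have hN : (maxAntipaths hQ st : Set Thread).InjOn terminus := by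
    simpa only [maxAntipaths, Set.Finite.coe_toFinset] using hQ.injOn_target_tauAnti st
  have hA : (Q.A : Set ℕ).InjOn origin := fun a ha b hb hab =>
    st.eq_of_src_of_σ ha hb (Prod.mk.inj hab).1 (Prod.mk.inj hab).2
  have hdisj : Disjoint ((maxAntipaths hQ st).image terminus) (Q.A.image origin) := by
    simp only [Finset.disjoint_left, Finset.mem_image, mem_maxAntipaths]
    rintro _ ⟨w, hw, rfl⟩ ⟨a, ha, haw⟩
    exact hw.2.1 ⟨a, ha, (Prod.mk.inj haw).1, (Prod.mk.inj haw).2⟩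
  have hsub : (maxAntipaths hQ st).image terminus ∪ Q.A.image origin ⊆ Q.V ×ˢ {1, -1} := by
    refine Finset.union_subset ?_ ?_ <;> refine Finset.image_subset_iff.2 ?_
    · exact fun w hw => hQ.target_tauAnti_mem st (mem_maxAntipaths.1 hw)
    · exact fun a ha => by simpa [origin] using ⟨(hQ.endpoints_mem a ha).1, st.σ_pm a ha⟩
  calc (maxAntipaths hQ st).card + Q.A.card
      = ((maxAntipaths hQ st).image terminus ∪ Q.A.image origin).card := by
        rw [Finset.card_union_of_disjoint hdisj, Finset.card_image_of_injOn hN,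
          Finset.card_image_of_injOn hA]
    _ ≤ (Q.V ×ˢ ({1, -1} : Finset ℤ)).card := Finset.card_le_card hsub
    _ = 2 * Q.V.card := by rw [Finset.card_product, mul_comm]; rfl

/-- The arrows occurring in a thread. -/
def Thread.arrowSet : Thread → Finset ℕ
  | .triv _ _ => ∅
  | .arrows l => l.toFinset

theorem Thread.card_arrowSet_le : w.arrowSet.card ≤ w.len := by
  cases w with
  | triv => exact le_rfl
  | arrows l => exact l.toFinset_card_le

theorem card_arrows_le_sum_len_add_card (hQ : IsGentle Q) (st : SigmaTau Q) :
    Q.A.card ≤ ∑ w ∈ maxAntipaths hQ st, w.len + (antipathFreeArrows Q st).card := by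
  have hcover : Q.A ⊆ (maxAntipaths hQ st).biUnion Thread.arrowSet ∪ antipathFreeArrows Q st := by
    intro a ha
    rw [Finset.mem_union, Finset.mem_biUnion, mem_antipathFreeArrows, or_iff_not_imp_right]
    intro hC
    obtain ⟨l, hl, hal⟩ : ∃ l, InN Q st (.arrows l) ∧ a ∈ l := not_not.1 fun h => hC ⟨ha, h⟩
    exact ⟨.arrows l, mem_maxAntipaths.2 hl, List.mem_toFinset.2 hal⟩
  calc Q.A.card
      ≤ ((maxAntipaths hQ st).biUnion Thread.arrowSet).card + (antipathFreeArrows Q st).card :=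
        (Finset.card_le_card hcover).trans (Finset.card_union_le _ _)
    _ ≤ _ := Nat.add_le_add_right (Finset.card_biUnion_le.trans
        (Finset.sum_le_sum fun _ _ => Thread.card_arrowSet_le)) _

end Antipaths

section Orbits

open Relation

variable {α : Type*} {r : α → α → Prop} {s : Finset α} {x y : α} {O : Set α}

/-- The class of `x` for the equivalence relation generated by `r`; when `r` is the graph of a
permutation of a set containing `x`, this is the orbit of `x`. -/
def orbit (r : α → α → Prop) (x : α) : Set α := {y | EqvGen r x y}

open Classical in
/-- The orbits of the elements of `s`. -/
noncomputable def orbits (r : α → α → Prop) (s : Finset α) : Finset (Set α) := s.image (orbit r)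

theorem mem_orbits : O ∈ orbits r s ↔ ∃ x ∈ s, orbit r x = O := Finset.mem_image

theorem orbit_eq_orbit_iff : orbit r x = orbit r y ↔ EqvGen r x y :=
  ⟨fun h => show y ∈ orbit r x from h ▸ EqvGen.refl y,
    fun h => Set.ext fun _ => ⟨.trans _ _ _ (.symm _ _ h), .trans _ _ _ h⟩⟩

theorem mem_iff_of_eqvGen (hr : ∀ ⦃x y⦄, r x y → x ∈ s ∧ y ∈ s) (h : EqvGen r x y) :
    x ∈ s ↔ y ∈ s := by
  induction h with
  | rel x y h => exact iff_of_true (hr h).1 (hr h).2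
  | refl => exact .rfl
  | symm _ _ _ ih => exact ih.symm
  | trans _ _ _ _ _ ih ih' => exact ih.trans ih'

open Classical in
theorem orbit_eq_coe_filter (hr : ∀ ⦃x y⦄, r x y → x ∈ s ∧ y ∈ s) (hx : x ∈ s) :
    orbit r x = (s.filter fun y => orbit r y = orbit r x : Finset α) := by
  ext y
  simp only [Finset.coe_filter, Set.mem_ofPred_eq, orbit_eq_orbit_iff]
  exact ⟨fun h => ⟨(mem_iff_of_eqvGen hr h).1 hx, .symm _ _ h⟩, fun h => .symm _ _ h.2⟩

theorem sum_orbits_finsum_mem {M : Type*} [AddCommMonoid M]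
    (hr : ∀ ⦃x y⦄, r x y → x ∈ s ∧ y ∈ s) (f : α → M) :
    ∑ O ∈ orbits r s, ∑ᶠ x ∈ O, f x = ∑ x ∈ s, f x := by
  classical
  refine Finset.sum_image' f fun x hx => ?_
  rw [orbit_eq_coe_filter hr hx, finsum_mem_coe_finset, ← orbit_eq_coe_filter hr hx]

theorem sum_orbits_ncard (hr : ∀ ⦃x y⦄, r x y → x ∈ s ∧ y ∈ s) :
    ∑ O ∈ orbits r s, O.ncard = s.card := by
  simpa using sum_orbits_finsum_mem hr fun _ => (1 : ℕ)

theorem ncard_ne_zero_of_mem_orbits (hr : ∀ ⦃x y⦄, r x y → x ∈ s ∧ y ∈ s)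
    (hO : O ∈ orbits r s) : O.ncard ≠ 0 := by
  classical
  obtain ⟨x, hx, rfl⟩ := mem_orbits.1 hO
  have hfin : (orbit r x).Finite := orbit_eq_coe_filter hr hx ▸ Finset.finite_toSet _
  exact Set.ncard_ne_zero_of_mem (a := x) (EqvGen.refl x) hfin

end Orbits

section Invariant

open Relation

variable {Q : QuivRel} {st : SigmaTau Q}

/-- The pairs `(p(𝒪), q(𝒪))` for `𝒪 ∈ 𝒩/ℤ ⊔ 𝒞/ℤ`, with multiplicity, so that `fInv Q st` is the
multiplicity function. -/
noncomputable def orbitInvariants (hQ : IsGentle Q) (st : SigmaTau Q) : Multiset (ℕ × ℕ) :=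
  (orbits (PhiRel Q st) (maxAntipaths hQ st)).val.map (fun O => (pN O, qN O)) +
    (orbits (PsiRel Q st) (antipathFreeArrows Q st)).val.map fun O => (0, O.ncard)

theorem mem_of_phiRel (hQ : IsGentle Q) ⦃w w' : Thread⦄ (h : PhiRel Q st w w') :
    w ∈ maxAntipaths hQ st ∧ w' ∈ maxAntipaths hQ st :=
  ⟨mem_maxAntipaths.2 h.1, mem_maxAntipaths.2 h.2.1⟩

theorem mem_of_psiRel ⦃a b : ℕ⦄ (h : PsiRel Q st a b) :
    a ∈ antipathFreeArrows Q st ∧ b ∈ antipathFreeArrows Q st :=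
  ⟨mem_antipathFreeArrows.2 h.1, mem_antipathFreeArrows.2 h.2.1⟩

theorem mem_orbits_phiRel (hQ : IsGentle Q) {O : Set Thread} :
    O ∈ orbits (PhiRel Q st) (maxAntipaths hQ st) ↔ NOrbit Q st O := by
  simp only [mem_orbits, mem_maxAntipaths, NOrbit, orbit, eq_comm]

theorem mem_orbits_psiRel {O : Set ℕ} :
    O ∈ orbits (PsiRel Q st) (antipathFreeArrows Q st) ↔ COrbit Q st O := by
  simp only [mem_orbits, mem_antipathFreeArrows, COrbit, orbit, eq_comm]

theorem count_orbitInvariants (hQ : IsGentle Q) (pq : ℕ × ℕ) :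
    (orbitInvariants hQ st).count pq = fInv Q st pq := by
  classical
  rw [orbitInvariants, Multiset.count_add, Multiset.count_map, Multiset.count_map, fInv]
  congr 1
  · rw [← Finset.filter_val, Finset.card_val, ← Set.ncard_coe_finset]
    congr 1 with O
    simp [mem_orbits_phiRel, Prod.ext_iff, eq_comm]
  · rw [← Finset.filter_val, Finset.card_val, ← Set.ncard_coe_finset]
    congr 1 with O
    simp [mem_orbits_psiRel, Prod.ext_iff, eq_comm]

theorem sum_fst_orbitInvariants (hQ : IsGentle Q) :
    ((orbitInvariants hQ st).map Prod.fst).sum = (maxAntipaths hQ st).card := by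
  rw [← sum_orbits_ncard (mem_of_phiRel hQ)]
  simp [orbitInvariants, pN]

theorem sum_snd_orbitInvariants (hQ : IsGentle Q) :
    ((orbitInvariants hQ st).map Prod.snd).sum =
      ∑ w ∈ maxAntipaths hQ st, w.len + (antipathFreeArrows Q st).card := by
  rw [← sum_orbits_finsum_mem (mem_of_phiRel hQ), ← sum_orbits_ncard mem_of_psiRel]
  simp [orbitInvariants, qN]

theorem count_zero_orbitInvariants_le (hQ : IsGentle Q) (q : ℕ) :
    (orbitInvariants hQ st).count (0, q) ≤
      (orbits (PsiRel Q st) (antipathFreeArrows Q st)).card := by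
  have hN : (0, q) ∉ (orbits (PhiRel Q st) (maxAntipaths hQ st)).val.map
      fun O => (pN O, qN O) := by
    rw [Multiset.mem_map]
    rintro ⟨O, hO, hpq⟩
    exact ncard_ne_zero_of_mem_orbits (mem_of_phiRel hQ) hO (Prod.mk.inj hpq).1
  rw [orbitInvariants, Multiset.count_add, Multiset.count_eq_zero_of_notMem hN, zero_add]
  exact (Multiset.count_le_card _ _).trans (Multiset.card_map _ _).le

theorem two_mul_card_arrows_add_sum_fst_le (hQ : IsGentle Q) (st : SigmaTau Q) :
    2 * Q.A.card + ((orbitInvariants hQ st).map Prod.fst).sum ≤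
      2 * Q.V.card + ((orbitInvariants hQ st).map Prod.snd).sum := by
  have hle := card_maxAntipaths_add_card_arrows_le hQ st
  have hle' := card_arrows_le_sum_len_add_card hQ st
  rw [sum_fst_orbitInvariants, sum_snd_orbitInvariants]
  lia

theorem card_orbits_psiRel :
    (orbits (PsiRel Q st) (antipathFreeArrows Q st)).card = {O | COrbit Q st O}.ncard := by
  rw [← Set.ncard_coe_finset]
  exact congrArg Set.ncard (Set.ext fun _ => mem_orbits_psiRel)

theorem ClassAtilde.card_arrows_le (h : ClassAtilde Q st) :
    Q.A.card ≤ Q.V.card + {O | COrbit Q st O}.ncard := by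
  obtain ⟨hQ, m₁, m₂, p, q, -, -, hf⟩ := h
  have hinv : orbitInvariants hQ st =
      .replicate (m₁ + m₂) (0, 3) + {(p + m₁, p)} + {(q + m₂, q)} := by
    ext pq
    simp only [count_orbitInvariants, hf, charFn, Multiset.count_add, Multiset.count_replicate,
      Multiset.count_singleton, mul_ite, mul_one, mul_zero, eq_comm]
  have hle := two_mul_card_arrows_add_sum_fst_le hQ st
  have hcount := count_zero_orbitInvariants_le (st := st) hQ 3
  rw [hinv] at hle hcount
  rw [card_orbits_psiRel, Multiset.count_add, Multiset.count_add,
    Multiset.count_replicate_self] at hcount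
  simp only [Multiset.map_add, Multiset.map_replicate, Multiset.map_singleton, Multiset.sum_add,
    Multiset.sum_replicate, Multiset.sum_singleton, smul_eq_mul] at hle
  lia

open Classical in
theorem IsGentle.card_vertices_add_ncard_cOrbit_add_card_le (hQ : IsGentle Q) (st : SigmaTau Q)
    {b : ℕ} (hb : InC Q st b) {T : Finset ℕ} (hT : ∀ a ∈ T, a ∈ Q.A ∧ EqvGen (PsiRel Q st) b a)
    (hconn : Connected (deleteArrows Q T)) :
    Q.V.card + {O | COrbit Q st O}.ncard + T.card ≤ Q.A.card + 2 := by
  set ω := orbit (PsiRel Q st)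
  obtain ⟨X, hXC, hXinj, hX⟩ := Finset.exists_subset_injOn_image_eq_of_surjOn (f := ω)
    (antipathFreeArrows Q st) ((orbits (PsiRel Q st) (antipathFreeArrows Q st)).erase (ω b))
    fun O hO => by simpa using mem_orbits.1 (Finset.mem_of_mem_erase hO)
  have hTω : ∀ a ∈ T, ω a = ω b := fun a ha => (orbit_eq_orbit_iff.2 (hT a ha).2).symm
  have hXω : ∀ x ∈ X, ω x ≠ ω b := fun x hx =>
    Finset.ne_of_mem_erase (hX ▸ Finset.mem_image_of_mem ω hx)
  have hXC' : ∀ x ∈ X, InC Q st x := fun x hx => mem_antipathFreeArrows.1 (hXC hx)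
  have hconn' : Connected (deleteArrows Q (T ∪ X)) := by
    rw [← deleteArrows_deleteArrows]
    refine hconn.deleteArrows fun x hx => ?_
    rw [deleteArrows_deleteArrows]
    refine hQ.linked_deleteArrows_of_inC st (hXC' x hx) fun y hy hyx => ?_
    have hω : ω y = ω x := orbit_eq_orbit_iff.2 hyx
    rcases Finset.mem_union.1 hy with hy | hy
    · exact absurd (hω.symm.trans (hTω y hy)) (hXω x hx)
    · exact hXinj hy hx hω
  have hdisj : Disjoint T X := Finset.disjoint_left.2 fun a haT haX => hXω a haX (hTω a haT)
  have hTX : T ∪ X ⊆ Q.A :=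
    Finset.union_subset (fun a ha => (hT a ha).1) fun x hx => (hXC' x hx).1
  have hXcard : X.card + 1 = {O | COrbit Q st O}.ncard := by
    rw [← card_orbits_psiRel, ← Finset.card_image_of_injOn hXinj, hX]
    exact Finset.card_erase_add_one (mem_orbits.2 ⟨b, mem_antipathFreeArrows.2 hb, rfl⟩)
  have hle : Q.V.card ≤ (Q.A \ (T ∪ X)).card + 1 := Connected.card_vertices_le
    (Q := deleteArrows Q (T ∪ X)) hQ.1
    (fun a ha => hQ.endpoints_mem a (Finset.mem_sdiff.1 ha).1) hconn'
  have hcard := Finset.card_sdiff_add_card_eq_card hTX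
  rw [Finset.card_union_of_disjoint hdisj] at hcard
  lia

theorem IsGentle.not_connected_deleteArrows_triangle (hQ : IsGentle Q)
    (hcard : Q.A.card ≤ Q.V.card + {O | COrbit Q st O}.ncard) {a0 a1 a2 : ℕ}
    (htri : IsTriangleTriple Q a0 a1 a2) : ¬ Connected (deleteArrows Q {a0, a1, a2}) := by
  intro hconn
  obtain ⟨⟨h0, h1, h2, h01, h12, h02, -⟩, hr01, hr12, hr20⟩ := htri
  have hr02 : ReflTransGen (Rel Q) a0 a2 := .tail (.single hr01) hr12
  have hC : InC Q st a0 := (hQ.inC_iff_transGen st).2 (.tail' hr02 hr20)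
  have hle := hQ.card_vertices_add_ncard_cOrbit_add_card_le st hC (T := {a0, a1, a2}) (by
    simp only [Finset.mem_insert, Finset.mem_singleton, forall_eq_or_imp, forall_eq]
    exact ⟨⟨h0, .refl _⟩, ⟨h1, hQ.eqvGen_psiRel_of_reflTransGen st hC (.single hr01)⟩,
      ⟨h2, hQ.eqvGen_psiRel_of_reflTransGen st hC hr02⟩⟩) hconn
  rw [Finset.card_eq_three.2 ⟨a0, a1, a2, h01, h02, h12, rfl⟩] at hle
  lia

end Invariant

theorem stmt16_general {Q : QuivRel} {st : SigmaTau Q} (hQ : IsGentle Q)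
    (hcard : Q.A.card ≤ Q.V.card + {O | COrbit Q st O}.ncard)
    (hba : ∀ a : ℕ, ¬ BranchArrow Q a)
    (hbt : ∀ O : Finset ℕ, ¬ BranchTriangle Q O) :
    ∀ O : Finset ℕ, TriangleSet Q O →
      ∃! g : ℕ, g ∈ O ∧ ∀ a : ℕ, ¬ BranchArrow (deleteArrows Q {g}) a := by
  rintro O ⟨a0, a1, a2, rfl, htri⟩
  have hpair : ∃ S ⊆ ({a0, a1, a2} : Finset ℕ), S.card = 2 ∧ Connected (deleteArrows Q S) := by
    by_contra! hdisc
    exact hbt _ ⟨⟨a0, a1, a2, rfl, htri⟩, hdisc⟩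
  exact htri.1.existsUnique_not_branchArrow (fun a ha => (hQ.endpoints_mem a ha).1) hba hpair
    (hQ.not_connected_deleteArrows_triangle hcard htri)

/-- Let `𝚫 ∈ Ã` have no branch arrows and no branch
triangles.  Then each triangle `𝒪` contains a unique arrow `γ_𝒪` such that
`Δ ∖ {γ_𝒪}` has no branch arrows. -/
theorem stmt16 (Q : QuivRel) (st : SigmaTau Q) (hA : ClassAtilde Q st)
    (hba : ∀ a : ℕ, ¬ BranchArrow Q a)
    (hbt : ∀ O : Finset ℕ, ¬ BranchTriangle Q O) :
    ∀ O : Finset ℕ, TriangleSet Q O →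
      ∃! g : ℕ, g ∈ O ∧ ∀ a : ℕ, ¬ BranchArrow (deleteArrows Q {g}) a := by
  exact stmt16_general hA.1 hA.card_arrows_le hba hbt

end GentleQuiv
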